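/- Let d ≥ 1 and k ≥ 2 be integers. There exists a constant C = C(k, d) such that for every x ∈ 𝕊^k and every t ≥ 0, Σ_{w ∈ 𝕊^k} p_t^ℓ(x,w) · Σ_{1 ≤ i < j ≤ k} 1{‖w_i − w_j‖ = 1} ≤ C / (√t + 1)^d. -/

import Mathlib

open scoped Classical

noncomputable section

namespace SSEPPaper

/-- Configurations of `k` labelled particles on `ℤ^d`. -/
abbrev Conf (d k : ℕ) := Fin k → Fin d → ℤ

/-- Euclidean norm of an integer vector in `ℤ^d`. -/
def vnorm {d : ℕ} (v : Fin d → ℤ) : ℝ := Real.sqrt (∑ j, ((v j : ℝ)) ^ 2)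

/-- Euclidean norm on `(ℝ^d)^k` of an integer configuration. -/
def cnorm {d k : ℕ} (x : Conf d k) : ℝ := Real.sqrt (∑ i, ∑ j, ((x i j : ℝ)) ^ 2)

/-- The set `𝕊^k` of configurations with pairwise distinct particle positions. -/
def SSet (d k : ℕ) : Set (Conf d k) := {x | ∀ i j : Fin k, i ≠ j → x i ≠ x j}

/-- Swap of the coordinates `i` and `j` of a configuration, i.e. `σ^{i,j}x`. -/
def cswap {d k : ℕ} (i j : Fin k) (x : Conf d k) : Conf d k := x ∘ Equiv.swap i j

/-- `δ^{i,j}w`: the configuration which agrees with `w` except that its `j`-th coordinate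
is replaced by `w i`. -/
def cdelta {d k : ℕ} (i j : Fin k) (w : Conf d k) : Conf d k := Function.update w j (w i)

/-- Kronecker delta function at `y`. -/
def deltaFn {α : Type*} (y : α) : α → ℝ := fun x => if x = y then 1 else 0

/-- Generator of the labelled exclusion process, extended to all of `(ℤ^d)^k`. -/
def Lexc {d k : ℕ} (f : Conf d k → ℝ) : Conf d k → ℝ := fun x =>
  (∑' y : Conf d k, if cnorm (y - x) = 1 ∧ y ∈ SSet d k then f y - f x else 0) +
    ∑ i : Fin k, ∑ j : Fin k,
      if i < j ∧ vnorm (x i - x j) = 1 ∧ x ∈ SSet d k then f (cswap i j x) - f x else 0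

/-- Generator of `k` independent simple random walks on `ℤ^d`. -/
def Lrw {d k : ℕ} (f : Conf d k → ℝ) : Conf d k → ℝ := fun x =>
  ∑' z : Conf d k, if cnorm (z - x) = 1 then f z - f x else 0

/-- Generator (discrete Laplacian) of a single simple random walk on `ℤ^d`. -/
def Lap {d : ℕ} (f : (Fin d → ℤ) → ℝ) : (Fin d → ℤ) → ℝ := fun x =>
  ∑' y : Fin d → ℤ, if vnorm (y - x) = 1 then f y - f x else 0

/-- Transition probabilities `p_t^ℓ(x,y) = (e^{tL^ℓ} δ_y)(x)` of the labelled exclusion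
process, given by the exponential power series of the generator. -/
def ptl {d k : ℕ} (t : ℝ) (x y : Conf d k) : ℝ :=
  ∑' n : ℕ, t ^ n / n.factorial * ((Lexc (d := d) (k := k))^[n] (deltaFn y)) x

/-- Transition probabilities `p_t^{rw}(x,y) = (e^{tL^{rw}} δ_y)(x)` of `k` independent
simple random walks on `ℤ^d`. -/
def ptrw {d k : ℕ} (t : ℝ) (x y : Conf d k) : ℝ :=
  ∑' n : ℕ, t ^ n / n.factorial * ((Lrw (d := d) (k := k))^[n] (deltaFn y)) x

/-- Transition probabilities `p_t(x,y) = (e^{tΔ} δ_y)(x)` of a single continuous-time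
simple random walk on `ℤ^d`. -/
def pt1 {d : ℕ} (t : ℝ) (x y : Fin d → ℤ) : ℝ :=
  ∑' n : ℕ, t ^ n / n.factorial * ((Lap (d := d))^[n] (deltaFn y)) x

/-- The configuration `e₁₁ = ((1,0,…,0),(0,…,0),…,(0,…,0))`. -/
def e11 (d k : ℕ) : Conf d k := fun i j => if i.val = 0 ∧ j.val = 0 then 1 else 0

/-! ### Bounded functions and exponentials of operators -/

/-- Bounded functions on a discrete space, as a Banach algebra. -/
def BF (α : Type*) [TopologicalSpace α] := BoundedContinuousFunction α ℝ

namespace BF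

variable {α : Type*} [TopologicalSpace α]

instance : NormedCommRing (BF α) :=
  inferInstanceAs (NormedCommRing (BoundedContinuousFunction α ℝ))

instance : NormedAlgebra ℝ (BF α) :=
  inferInstanceAs (NormedAlgebra ℝ (BoundedContinuousFunction α ℝ))

instance : CompleteSpace (BF α) :=
  inferInstanceAs (CompleteSpace (BoundedContinuousFunction α ℝ))

instance : FunLike (BF α) α ℝ :=
  inferInstanceAs (FunLike (BoundedContinuousFunction α ℝ) α ℝ)

lemma ext' {f g : BF α} (h : ∀ x, f x = g x) : f = g := BoundedContinuousFunction.ext h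

lemma add_apply (f g : BF α) (x : α) : (f + g) x = f x + g x := rfl
lemma sub_apply (f g : BF α) (x : α) : (f - g) x = f x - g x := rfl
lemma mul_apply (f g : BF α) (x : α) : (f * g) x = f x * g x := rfl
lemma smul_apply (c : ℝ) (f : BF α) (x : α) : (c • f) x = c * f x := rfl
lemma zero_apply (x : α) : (0 : BF α) x = 0 := rfl
lemma one_apply (x : α) : (1 : BF α) x = 1 := rfl

lemma abs_apply_le (f : BF α) (x : α) : |f x| ≤ ‖f‖ :=
  BoundedContinuousFunction.norm_coe_le_norm (f : BoundedContinuousFunction α ℝ) x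

lemma norm_le' (f : BF α) {C : ℝ} (hC : 0 ≤ C) (h : ∀ x, |f x| ≤ C) : ‖f‖ ≤ C :=
  (BoundedContinuousFunction.norm_le (f := (f : BoundedContinuousFunction α ℝ)) hC).2 h

/-- Evaluation at a point. -/
def ev (x : α) : BF α →L[ℝ] ℝ :=
  LinearMap.mkContinuous
    { toFun := fun f => f x
      map_add' := fun f g => add_apply f g x
      map_smul' := fun c f => smul_apply c f x } 1 (by
    intro f; simpa using abs_apply_le f x)

lemma ev_apply (x : α) (f : BF α) : ev x f = f x := rfl

lemma sum_apply {ι : Type*} (s : Finset ι) (f : ι → BF α) (x : α) :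
    (∑ i ∈ s, f i) x = ∑ i ∈ s, f i x := by
  exact map_sum (ev x) f s

lemma prod_apply {ι : Type*} (s : Finset ι) (f : ι → BF α) (x : α) :
    (∏ i ∈ s, f i) x = ∏ i ∈ s, f i x := by
  induction s using Finset.induction_on with
  | empty => simp [one_apply]
  | insert a s ha ih => rw [Finset.prod_insert ha, Finset.prod_insert ha, mul_apply, ih]

variable [DiscreteTopology α]

/-- Build a bounded function. -/
def mk (f : α → ℝ) (C : ℝ) (h : ∀ x, |f x| ≤ C) : BF α :=
  BoundedContinuousFunction.ofNormedAddCommGroupDiscrete f C h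

lemma mk_apply (f : α → ℝ) (C : ℝ) (h : ∀ x, |f x| ≤ C) (x : α) : mk f C h x = f x := rfl

/-- Bounded operator from a linear formula. -/
def mkOp {β : Type*} [TopologicalSpace β] (A : (β → ℝ) → (α → ℝ)) (C : ℝ) (hC : 0 ≤ C)
    (hadd : ∀ f g : BF β, A (fun x => f x + g x) = fun x => A f x + A g x)
    (hsmul : ∀ (c : ℝ) (f : BF β), A (fun x => c * f x) = fun x => c * A f x)
    (hb : ∀ (f : BF β) (x : α), |A f x| ≤ C * ‖f‖) : BF β →L[ℝ] BF α :=
  LinearMap.mkContinuous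
    { toFun := fun f => mk (A f) (C * ‖f‖) (hb f)
      map_add' := fun f g => ext' fun x => congrFun (hadd f g) x
      map_smul' := fun c f => ext' fun x => congrFun (hsmul c f) x } C (by
    intro f
    exact norm_le' _ (by positivity) (hb f))

lemma mkOp_apply {β : Type*} [TopologicalSpace β] (A : (β → ℝ) → (α → ℝ)) (C : ℝ) (hC : 0 ≤ C)
    (hadd : ∀ f g : BF β, A (fun x => f x + g x) = fun x => A f x + A g x)
    (hsmul : ∀ (c : ℝ) (f : BF β), A (fun x => c * f x) = fun x => c * A f x)
    (hb : ∀ (f : BF β) (x : α), |A f x| ≤ C * ‖f‖) (f : BF β) (x : α) :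
    mkOp A C hC hadd hsmul hb f x = A f x := rfl

end BF

/-- The semigroup generated by a bounded operator. -/
def semi {E : Type*} [NormedAddCommGroup E] [NormedSpace ℝ E] (A : E →L[ℝ] E) (t : ℝ) :
    E →L[ℝ] E := NormedSpace.exp (t • A)

section semi

set_option linter.unusedSectionVars false

variable {E : Type*} [NormedAddCommGroup E] [NormedSpace ℝ E] [CompleteSpace E]

lemma semi_hasSum (A : E →L[ℝ] E) (t : ℝ) (l : E →L[ℝ] ℝ) (f : E) :
    HasSum (fun n : ℕ => t ^ n / n.factorial * l ((A ^ n) f)) (l (semi A t f)) := by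
  have h := NormedSpace.exp_series_hasSum_exp' (𝕂 := ℝ) (t • A)
  have h2 := h.mapL (l.comp (ContinuousLinearMap.apply ℝ E f))
  have e : (fun n : ℕ => t ^ n / n.factorial * l ((A ^ n) f)) =
      fun n : ℕ => (l.comp (ContinuousLinearMap.apply ℝ E f))
        ((n.factorial : ℝ)⁻¹ • (t • A) ^ n) := by
    funext n
    rw [smul_pow]
    simp
    ring
  rw [e]
  exact h2

lemma semi_zero (A : E →L[ℝ] E) (f : E) : semi A 0 f = f := by
  simp [semi]

lemma semi_hasDerivAt (A : E →L[ℝ] E) (s : ℝ) :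
    HasDerivAt (semi A) (A * semi A s) s := hasDerivAt_exp_smul_const' A s

lemma semi_hasDerivAt' (A : E →L[ℝ] E) (s : ℝ) :
    HasDerivAt (semi A) (semi A s * A) s := hasDerivAt_exp_smul_const A s

lemma semi_shift (A : E →L[ℝ] E) (c t : ℝ) :
    semi A t = Real.exp (-(t * c)) • semi (A + c • 1) t := by
  let _ : NormedAlgebra ℚ (E →L[ℝ] E) := NormedAlgebra.restrictScalars ℚ ℝ _
  have e : t • A = (algebraMap ℝ (E →L[ℝ] E) (-(t * c))) + t • (A + c • 1) := by
    rw [Algebra.algebraMap_eq_smul_one]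
    module
  have hc : Commute (algebraMap ℝ (E →L[ℝ] E) (-(t * c))) (t • (A + c • 1)) :=
    Algebra.commutes _ _
  unfold semi
  rw [e, NormedSpace.exp_add_of_commute hc, ← NormedSpace.algebraMap_exp_comm,
    ← Real.exp_eq_exp_ℝ, Algebra.algebraMap_eq_smul_one]
  simp

end semi

lemma _root_.HasSum.congr_fun' {f g : ℕ → ℝ} {a : ℝ} (h : HasSum f a) (e : ∀ n, g n = f n) :
    HasSum g a := by
  have : g = f := funext e
  rwa [this]

/-! ### One-dimensional heat flow -/

/-- Twice the one-dimensional discrete Laplacian, as a bounded operator. -/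
def M1 : BF ℤ →L[ℝ] BF ℤ :=
  BF.mkOp (fun f z => 2 * (f (z + 1) + f (z - 1) - 2 * f z)) 8 (by norm_num)
    (by intro f g; funext z; ring)
    (by intro f g; funext z; ring)
    (by
      intro f z
      have h1 := abs_le.1 (f.abs_apply_le (z + 1))
      have h2 := abs_le.1 (f.abs_apply_le (z - 1))
      have h3 := abs_le.1 (f.abs_apply_le z)
      rw [abs_le]
      constructor <;> linarith)

lemma M1_apply (f : BF ℤ) (z : ℤ) :
    M1 f z = 2 * (f (z + 1) + f (z - 1) - 2 * f z) := rfl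

/-- Initial condition. -/
def g1 : BF ℤ :=
  BF.mk (fun z => if z = 0 then 1 else if z = 1 ∨ z = -1 then 1 / 2 else 0) 1 (by
      intro z; split_ifs <;> norm_num)

lemma g1_apply (z : ℤ) :
    g1 z = if z = 0 then 1 else if z = 1 ∨ z = -1 then 1 / 2 else 0 := rfl

lemma integral_cos_int (n : ℤ) :
    ∫ θ in (-Real.pi)..Real.pi, Real.cos (θ * n) = if n = 0 then 2 * Real.pi else 0 := by
  split_ifs with h
  · subst h; simp; ring
  · have hn : (n : ℝ) ≠ 0 := by exact_mod_cast h
    rw [intervalIntegral.integral_comp_mul_right _ hn, integral_cos]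
    have : Real.sin (Real.pi * n) = 0 := by rw [mul_comm]; exact Real.sin_int_mul_pi n
    simp [this]

lemma g1_fourier (z : ℤ) :
    g1 z = (2 * Real.pi)⁻¹ * ∫ θ in (-Real.pi)..Real.pi, (1 + Real.cos θ) * Real.cos (θ * z) := by
  have hpi := Real.pi_pos
  have e : ∀ θ : ℝ, (1 + Real.cos θ) * Real.cos (θ * z) =
      Real.cos (θ * (z : ℤ)) + (1 / 2) * Real.cos (θ * ((z + 1 : ℤ) : ℝ))
        + (1 / 2) * Real.cos (θ * ((z - 1 : ℤ) : ℝ)) := by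
    intro θ
    have h1 : θ * ((z + 1 : ℤ) : ℝ) = θ * z + θ := by push_cast; ring
    have h2 : θ * ((z - 1 : ℤ) : ℝ) = θ * z - θ := by push_cast; ring
    rw [h1, h2, Real.cos_add, Real.cos_sub]; ring
  simp_rw [e]
  have hc : ∀ n : ℤ, Continuous fun θ : ℝ => Real.cos (θ * n) := fun n => by fun_prop
  rw [intervalIntegral.integral_add, intervalIntegral.integral_add,
    intervalIntegral.integral_const_mul, intervalIntegral.integral_const_mul,
    integral_cos_int, integral_cos_int, integral_cos_int, g1_apply]
  · by_cases h0 : z = 0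
    · subst h0; simp; field_simp
    · by_cases h1 : z = 1
      · subst h1; simp; field_simp
      · by_cases h2 : z = -1
        · subst h2; simp; field_simp
        · have a1 : z + 1 ≠ 0 := by omega
          have a2 : z - 1 ≠ 0 := by omega
          simp [h0, h1, h2, a1, a2]
  · exact (hc z).intervalIntegrable _ _
  · exact ((hc _).const_mul _).intervalIntegrable _ _
  · exact ((hc z).add ((hc _).const_mul _)).intervalIntegrable _ _
  · exact ((hc _).const_mul _).intervalIntegrable _ _

lemma M1_pow_fourier (n : ℕ) (z : ℤ) :
    (M1 ^ n) g1 z = (2 * Real.pi)⁻¹ * ∫ θ in (-Real.pi)..Real.pi,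
      (-4 * (1 - Real.cos θ)) ^ n * ((1 + Real.cos θ) * Real.cos (θ * z)) := by
  induction n generalizing z with
  | zero => simpa using g1_fourier z
  | succ n ih =>
    rw [pow_succ', mul_apply_eq_comp, M1_apply, ih, ih, ih]
    have hc : ∀ n : ℕ, ∀ m : ℤ, Continuous fun θ : ℝ =>
      (-4 * (1 - Real.cos θ)) ^ n * ((1 + Real.cos θ) * Real.cos (θ * m)) :=
        fun n m => by fun_prop
    have hi := fun n m => (hc n m).intervalIntegrable (μ := MeasureTheory.volume)
      (-Real.pi) Real.pi
    have e : ∀ θ : ℝ, (-4 * (1 - Real.cos θ)) ^ (n + 1) * ((1 + Real.cos θ) * Real.cos (θ * z))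
      = 2 * (((-4 * (1 - Real.cos θ)) ^ n * ((1 + Real.cos θ) * Real.cos (θ * ((z + 1 : ℤ) : ℝ))) +
         (-4 * (1 - Real.cos θ)) ^ n * ((1 + Real.cos θ) * Real.cos (θ * ((z - 1 : ℤ) : ℝ)))) -
         2 * ((-4 * (1 - Real.cos θ)) ^ n * ((1 + Real.cos θ) * Real.cos (θ * z)))) := by
      intro θ
      have h1 : θ * ((z + 1 : ℤ) : ℝ) = θ * z + θ := by push_cast; ring
      have h2 : θ * ((z - 1 : ℤ) : ℝ) = θ * z - θ := by push_cast; ring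
      rw [h1, h2, Real.cos_add, Real.cos_sub]; ring
    simp_rw [e]
    rw [intervalIntegral.integral_const_mul, intervalIntegral.integral_sub,
      intervalIntegral.integral_add, intervalIntegral.integral_const_mul]
    · ring
    · exact hi n _
    · exact hi n _
    · exact (hi n _).add (hi n _)
    · exact (hi n _).const_mul _

/-- The one-dimensional heat flow started from `g1`. -/
def phi (s : ℝ) : BF ℤ := semi M1 s g1

lemma phi_zero : phi 0 = g1 := semi_zero M1 g1

lemma phi_hasDerivAt (s : ℝ) : HasDerivAt phi (M1 (phi s)) s := by
  have h := (semi_hasDerivAt M1 s).clm_apply (hasDerivAt_const s g1)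
  have e : (M1 * semi M1 s) g1 + semi M1 s 0 = M1 (phi s) := by simp [phi]
  rw [e] at h
  exact h

lemma phi_fourier (s : ℝ) (z : ℤ) :
    phi s z = (2 * Real.pi)⁻¹ * ∫ θ in (-Real.pi)..Real.pi,
      Real.exp (s * (-4 * (1 - Real.cos θ))) * ((1 + Real.cos θ) * Real.cos (θ * z)) := by
  have h1 := semi_hasSum M1 s (BF.ev z) g1
  refine h1.unique ?_
  have h2 : HasSum (fun n : ℕ => ∫ θ in (-Real.pi)..Real.pi,
      s ^ n / n.factorial * ((-4 * (1 - Real.cos θ)) ^ n * ((1 + Real.cos θ) * Real.cos (θ * z))))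
      (∫ θ in (-Real.pi)..Real.pi,
      Real.exp (s * (-4 * (1 - Real.cos θ))) * ((1 + Real.cos θ) * Real.cos (θ * z))) := by
    refine intervalIntegral.hasSum_integral_of_dominated_convergence
      (fun n _ => (|s| * 8) ^ n / n.factorial * 2) ?_ ?_ ?_ ?_ ?_
    · intro n
      exact Continuous.aestronglyMeasurable (by fun_prop)
    · intro n
      refine Filter.Eventually.of_forall fun θ _ => ?_
      have c1 := Real.cos_le_one θ
      have c2 := Real.neg_one_le_cos θ
      have c3 := Real.abs_cos_le_one (θ * z)
      have a1 : |(-4 * (1 - Real.cos θ))| ≤ 8 := by rw [abs_le]; constructor <;> linarith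
      have a2 : |1 + Real.cos θ| ≤ 2 := by rw [abs_le]; constructor <;> linarith
      rw [Real.norm_eq_abs, abs_mul, abs_mul, abs_mul, abs_pow, abs_div, abs_pow, Nat.abs_cast,
        mul_pow]
      have b1 : |(-4 * (1 - Real.cos θ))| ^ n ≤ 8 ^ n := by gcongr
      have b2 : |1 + Real.cos θ| * |Real.cos (θ * z)| ≤ 2 * 1 := by gcongr
      calc |s| ^ n / n.factorial * (|(-4 * (1 - Real.cos θ))| ^ n *
            (|1 + Real.cos θ| * |Real.cos (θ * z)|))
          ≤ |s| ^ n / n.factorial * (8 ^ n * (2 * 1)) := by gcongr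
        _ = _ := by ring
    · refine Filter.Eventually.of_forall fun θ _ => ?_
      exact (Real.summable_pow_div_factorial _).mul_right _
    · exact intervalIntegrable_const
    · refine Filter.Eventually.of_forall fun θ _ => ?_
      have h3 := NormedSpace.expSeries_div_hasSum_exp (s * (-4 * (1 - Real.cos θ)))
      rw [← Real.exp_eq_exp_ℝ] at h3
      have h4 := h3.mul_right ((1 + Real.cos θ) * Real.cos (θ * z))
      refine h4.congr_fun' ?_
      intro n
      rw [mul_pow s]; ring
  have h5 := h2.mul_left (2 * Real.pi)⁻¹
  refine h5.congr_fun' ?_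
  intro n
  rw [BF.ev_apply, M1_pow_fourier, intervalIntegral.integral_const_mul]
  ring

lemma phi_even (s : ℝ) (z : ℤ) : phi s (-z) = phi s z := by
  rw [phi_fourier, phi_fourier]
  push_cast
  simp [Real.cos_neg]

lemma phi_abs_le (s : ℝ) (z : ℤ) : |phi s z| ≤ phi s 0 := by
  rw [phi_fourier, phi_fourier, abs_mul, abs_of_pos (by have := Real.pi_pos; positivity)]
  have hpi := Real.pi_pos
  gcongr
  refine (intervalIntegral.abs_integral_le_integral_abs (by linarith)).trans ?_
  refine intervalIntegral.integral_mono_on (by linarith) ?_ ?_ ?_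
  · exact Continuous.intervalIntegrable (by fun_prop) _ _
  · exact Continuous.intervalIntegrable (by fun_prop) _ _
  · intro θ _
    have c2 := Real.neg_one_le_cos θ
    have c3 := Real.abs_cos_le_one (θ * z)
    have : 0 ≤ 1 + Real.cos θ := by linarith
    rw [abs_mul, abs_mul, abs_of_pos (Real.exp_pos _), abs_of_nonneg this]
    simp only [Int.cast_zero, mul_zero, Real.cos_zero]
    gcongr

lemma phi_le_two {s : ℝ} (hs : 0 ≤ s) : phi s 0 ≤ 2 := by
  have hpi := Real.pi_pos
  rw [phi_fourier]
  have : ∫ θ in (-Real.pi)..Real.pi, Real.exp (s * (-4 * (1 - Real.cos θ))) *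
      ((1 + Real.cos θ) * Real.cos (θ * (0 : ℤ))) ≤ ∫ θ in (-Real.pi)..Real.pi, (2 : ℝ) := by
    refine intervalIntegral.integral_mono_on (by linarith) ?_ ?_ ?_
    · exact Continuous.intervalIntegrable (by fun_prop) _ _
    · exact intervalIntegrable_const
    · intro θ _
      have c1 := Real.cos_le_one θ
      have c2 := Real.neg_one_le_cos θ
      have : Real.exp (s * (-4 * (1 - Real.cos θ))) ≤ 1 := by
        rw [Real.exp_le_one_iff]; nlinarith
      simp only [Int.cast_zero, mul_zero, Real.cos_zero, mul_one]
      nlinarith [Real.exp_pos (s * (-4 * (1 - Real.cos θ)))]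
  calc _ ≤ (2 * Real.pi)⁻¹ * ∫ θ in (-Real.pi)..Real.pi, (2 : ℝ) := by gcongr
    _ = 2 := by simp; field_simp; norm_num

lemma phi_le_gauss {s : ℝ} (hs : 0 < s) : phi s 0 ≤ 2 / Real.sqrt s := by
  have hpi := Real.pi_pos
  rw [phi_fourier]
  set b : ℝ := 8 * s / Real.pi ^ 2 with hb
  have hbpos : 0 < b := by positivity
  have hgauss := integrable_exp_neg_mul_sq hbpos
  have h1 : ∫ θ in (-Real.pi)..Real.pi, Real.exp (s * (-4 * (1 - Real.cos θ))) *
      ((1 + Real.cos θ) * Real.cos (θ * (0 : ℤ))) ≤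
      ∫ θ in (-Real.pi)..Real.pi, 2 * Real.exp (-b * θ ^ 2) := by
    refine intervalIntegral.integral_mono_on (by linarith) ?_ ?_ ?_
    · exact Continuous.intervalIntegrable (by fun_prop) _ _
    · exact Continuous.intervalIntegrable (by fun_prop) _ _
    · intro θ hθ
      have c1 := Real.cos_le_one θ
      have c2 := Real.neg_one_le_cos θ
      have c4 := Real.cos_le_one_sub_mul_cos_sq (abs_le.2 hθ)
      have : Real.exp (s * (-4 * (1 - Real.cos θ))) ≤ Real.exp (-b * θ ^ 2) := by
        rw [Real.exp_le_exp]
        have : -b * θ ^ 2 = s * (-4 * (2 / Real.pi ^ 2 * θ ^ 2)) := by rw [hb]; ring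
        rw [this]
        have : 2 / Real.pi ^ 2 * θ ^ 2 ≤ 1 - Real.cos θ := by linarith
        nlinarith
      simp only [Int.cast_zero, mul_zero, Real.cos_zero, mul_one]
      nlinarith [Real.exp_pos (s * (-4 * (1 - Real.cos θ)))]
  have h2 : ∫ θ in (-Real.pi)..Real.pi, Real.exp (-b * θ ^ 2) ≤ Real.sqrt (Real.pi / b) := by
    rw [← integral_gaussian, intervalIntegral.integral_of_le (by linarith)]
    exact MeasureTheory.setIntegral_le_integral hgauss
      (Filter.Eventually.of_forall fun _ => (Real.exp_pos _).le)
  rw [intervalIntegral.integral_const_mul] at h1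
  have h3 : Real.sqrt (Real.pi / b) ≤ 2 * Real.pi / Real.sqrt s := by
    rw [Real.sqrt_le_left (by positivity), div_pow, Real.sq_sqrt hs.le, hb]
    rw [div_div_eq_mul_div, div_le_div_iff₀ (by positivity) hs]
    have := Real.pi_le_four
    have : Real.pi ^ 3 ≤ 4 * Real.pi ^ 2 := by nlinarith [sq_nonneg Real.pi]
    nlinarith [mul_le_mul_of_nonneg_left this hs.le, sq_nonneg Real.pi,
      mul_nonneg hs.le (sq_nonneg Real.pi)]
  calc _ ≤ (2 * Real.pi)⁻¹ * (2 * (2 * Real.pi / Real.sqrt s)) := by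
        gcongr; exact h1.trans (by gcongr; exact h2.trans h3)
    _ = 2 / Real.sqrt s := by
      have : Real.sqrt s ≠ 0 := (Real.sqrt_pos.2 hs).ne'
      field_simp

lemma phi_bound {s : ℝ} (hs : 0 ≤ s) : phi s 0 ≤ 4 / (Real.sqrt s + 1) := by
  have h0 := Real.sqrt_nonneg s
  rcases le_or_gt s 1 with h | h
  · refine (phi_le_two hs).trans ?_
    have : Real.sqrt s ≤ 1 := Real.sqrt_le_one.2 h
    rw [le_div_iff₀ (by positivity)]; linarith
  · refine (phi_le_gauss (by linarith)).trans ?_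
    have : 1 ≤ Real.sqrt s := Real.one_le_sqrt.2 h.le
    rw [div_le_div_iff₀ (by positivity) (by positivity)]; linarith

/-! ### The generator -/

lemma sum_sq_eq_one {ι : Type*} [Fintype ι] (v : ι → ℤ) :
    (∑ p, (v p : ℝ) ^ 2 = 1) ↔ ∃ p, (v p = 1 ∨ v p = -1) ∧ ∀ q, q ≠ p → v q = 0 := by
  have hcast : (∑ p, (v p : ℝ) ^ 2 = 1) ↔ ∑ p, v p ^ 2 = 1 := by
    constructor <;> intro h <;> exact_mod_cast h
  rw [hcast]
  constructor
  · intro h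
    have h1 : ∃ p, v p ≠ 0 := by
      by_contra hcon
      push Not at hcon
      simp [hcon] at h
    obtain ⟨p, hp⟩ := h1
    have h2 := Finset.add_sum_erase Finset.univ (fun q => v q ^ 2) (Finset.mem_univ p)
    have h3 : 0 ≤ ∑ q ∈ Finset.univ.erase p, v q ^ 2 :=
      Finset.sum_nonneg fun q _ => sq_nonneg _
    have h4 : 0 < v p ^ 2 := by positivity
    have h5 : v p ^ 2 = 1 := by omega
    have h6 : ∑ q ∈ Finset.univ.erase p, v q ^ 2 = 0 := by omega
    refine ⟨p, sq_eq_one_iff.1 h5, ?_⟩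
    intro q hq
    have := (Finset.sum_eq_zero_iff_of_nonneg (fun q _ => sq_nonneg (v q))).1 h6 q
      (Finset.mem_erase.2 ⟨hq, Finset.mem_univ q⟩)
    exact pow_eq_zero_iff (two_ne_zero) |>.1 this
  · rintro ⟨p, hp, hq⟩
    rw [Finset.sum_eq_single p]
    · rcases hp with h | h <;> simp [h]
    · intro q _ hqp; simp [hq q hqp]
    · simp

/-- sign attached to a boolean -/
def sg (b : Bool) : ℤ := if b then 1 else -1

/-- unit vectors of `ℤ^d` -/
def uv {d : ℕ} (a : Fin d × Bool) : Fin d → ℤ := Pi.single a.1 (sg a.2)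

/-- move particle `m` by `uv a`. -/
def mv {d k : ℕ} (x : Conf d k) (m : Fin k) (a : Fin d × Bool) : Conf d k :=
  Function.update x m (x m + uv a)

lemma sg_inj {b c : Bool} (h : sg b = sg c) : b = c := by
  cases b <;> cases c <;> simp [sg] at h ⊢

lemma sg_ne (b : Bool) : sg b ≠ 0 := by cases b <;> simp [sg]

lemma uv_inj {d : ℕ} : Function.Injective (uv (d := d)) := by
  rintro ⟨l, b⟩ ⟨m, c⟩ h
  have h1 := congrFun h l
  simp only [uv, Pi.single_eq_same] at h1
  by_cases hlm : l = m
  · subst hlm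
    simp only [Pi.single_eq_same] at h1
    rw [sg_inj h1]
  · rw [Pi.single_eq_of_ne hlm] at h1
    exact absurd h1 (sg_ne b)

lemma uv_ne {d : ℕ} (a : Fin d × Bool) : uv a ≠ 0 := by
  intro h
  have := congrFun h a.1
  simp [uv, sg_ne] at this

lemma vnorm_eq_one {d : ℕ} (v : Fin d → ℤ) : vnorm v = 1 ↔ ∃ a, v = uv a := by
  rw [vnorm, Real.sqrt_eq_one, sum_sq_eq_one]
  constructor
  · rintro ⟨p, hp, hq⟩
    rcases hp with hp | hp
    · refine ⟨(p, true), funext fun q => ?_⟩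
      by_cases h : q = p
      · subst h; simp [uv, sg, hp]
      · simp [uv, h, hq q h]
    · refine ⟨(p, false), funext fun q => ?_⟩
      by_cases h : q = p
      · subst h; simp [uv, sg, hp]
      · simp [uv, h, hq q h]
  · rintro ⟨⟨p, b⟩, rfl⟩
    refine ⟨p, ?_, ?_⟩
    · cases b <;> simp [uv, sg]
    · intro q hq; simp [uv, hq]

lemma vnorm_neg {d : ℕ} (v : Fin d → ℤ) : vnorm (-v) = vnorm v := by simp [vnorm]

lemma vnorm_sub_comm {d : ℕ} (v w : Fin d → ℤ) : vnorm (v - w) = vnorm (w - v) := by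
  rw [← vnorm_neg, neg_sub]

lemma cnorm_eq_one {d k : ℕ} (x y : Conf d k) : cnorm (y - x) = 1 ↔ ∃ m a, y = mv x m a := by
  have h0 : ∑ i, ∑ j, (((y - x) i j : ℤ) : ℝ) ^ 2 =
      ∑ p : Fin k × Fin d, (((fun p : Fin k × Fin d => (y - x) p.1 p.2) p : ℤ) : ℝ) ^ 2 := by
    rw [Fintype.sum_prod_type]
  rw [cnorm, Real.sqrt_eq_one, h0, sum_sq_eq_one]
  constructor
  · rintro ⟨⟨m, l⟩, hp, hq⟩
    have hb : ∃ b, (y - x) m l = sg b := by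
      rcases hp with hp | hp
      · exact ⟨true, hp⟩
      · exact ⟨false, hp⟩
    obtain ⟨b, hb⟩ := hb
    refine ⟨m, (l, b), ?_⟩
    funext i j
    by_cases hi : i = m
    · subst hi
      by_cases hj : j = l
      · subst hj
        simp only [mv, uv, Function.update_self, Pi.add_apply, Pi.single_eq_same, ← hb,
          Pi.sub_apply]
        ring
      · have := hq (i, j) (by simp [hj])
        simp only [Pi.sub_apply] at this
        simp [mv, uv, hj]
        omega
    · have := hq (i, j) (by simp [hi])
      simp only [Pi.sub_apply] at this
      simp [mv, hi]
      omega
  · rintro ⟨m, ⟨l, b⟩, rfl⟩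
    refine ⟨(m, l), ?_, ?_⟩
    · cases b <;> simp [mv, uv, sg]
    · rintro ⟨i, j⟩ hq
      by_cases hi : i = m
      · subst hi
        have hj : j ≠ l := by rintro rfl; exact hq rfl
        simp [mv, uv, hj]
      · simp [mv, hi]

lemma mv_inj {d k : ℕ} (x : Conf d k) :
    Function.Injective (fun p : Fin k × (Fin d × Bool) => mv x p.1 p.2) := by
  rintro ⟨m, a⟩ ⟨n, c⟩ h
  simp only [mv] at h
  have h1 := congrFun h m
  simp only [Function.update_self] at h1
  by_cases hmn : m = n
  · subst hmn
    simp only [Function.update_self, add_right_inj] at h1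
    rw [uv_inj h1]
  · rw [Function.update_of_ne hmn] at h1
    exact absurd (by simpa using h1) (uv_ne a)

lemma Lexc_eq {d k : ℕ} (f : Conf d k → ℝ) (x : Conf d k) :
    Lexc f x = (∑ m : Fin k, ∑ a : Fin d × Bool,
        if mv x m a ∈ SSet d k then f (mv x m a) - f x else 0) +
      ∑ i : Fin k, ∑ j : Fin k,
        if i < j ∧ vnorm (x i - x j) = 1 ∧ x ∈ SSet d k then f (cswap i j x) - f x else 0 := by
  unfold Lexc
  congr 1
  rw [← (mv_inj x).tsum_eq, tsum_fintype, Fintype.sum_prod_type]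
  · refine Finset.sum_congr rfl fun m _ => Finset.sum_congr rfl fun a _ => ?_
    have : cnorm (mv x m a - x) = 1 := (cnorm_eq_one x _).2 ⟨m, a, rfl⟩
    simp [this]
  · intro y hy
    have : cnorm (y - x) = 1 := by
      by_contra hcon
      simp [hcon] at hy
    obtain ⟨m, a, h⟩ := (cnorm_eq_one x y).1 this
    exact ⟨(m, a), h.symm⟩

lemma cswap_mem {d k : ℕ} {x : Conf d k} (hx : x ∈ SSet d k) (i j : Fin k) :
    cswap i j x ∈ SSet d k := by
  intro a b hab
  exact hx _ _ (fun h => hab ((Equiv.swap i j).injective h))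

/-- total jump rate bound -/
def Lam (d k : ℕ) : ℝ := k * (d * 2) + k * k

lemma Lam_nonneg (d k : ℕ) : 0 ≤ Lam d k := by unfold Lam; positivity

lemma Lexc_abs_le {d k : ℕ} (f : Conf d k → ℝ) (B : ℝ) (hf : ∀ x, |f x| ≤ B) (x : Conf d k) :
    |Lexc f x| ≤ Lam d k * (2 * B) := by
  have hB : 0 ≤ B := (abs_nonneg _).trans (hf x)
  have h2 : ∀ y, |f y - f x| ≤ 2 * B := fun y =>
    (abs_sub _ _).trans (by linarith [hf y, hf x])
  rw [Lexc_eq]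
  refine (abs_add_le _ _).trans ?_
  rw [Lam, add_mul]
  refine add_le_add ?_ ?_
  · refine (Finset.abs_sum_le_sum_abs _ _).trans ?_
    refine (Finset.sum_le_card_nsmul _ _ ((d * 2) * (2 * B)) ?_).trans (le_of_eq ?_)
    · intro m _
      refine (Finset.abs_sum_le_sum_abs _ _).trans ?_
      refine (Finset.sum_le_card_nsmul _ _ (2 * B) ?_).trans (le_of_eq ?_)
      · intro a _
        split_ifs
        · exact h2 _
        · simp [hB]
      · simp
    · simp; ring
  · refine (Finset.abs_sum_le_sum_abs _ _).trans ?_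
    refine (Finset.sum_le_card_nsmul _ _ (k * (2 * B)) ?_).trans (le_of_eq ?_)
    · intro m _
      refine (Finset.abs_sum_le_sum_abs _ _).trans ?_
      refine (Finset.sum_le_card_nsmul _ _ (2 * B) ?_).trans (le_of_eq ?_)
      · intro a _
        split_ifs
        · exact h2 _
        · simp [hB]
      · simp
    · simp; ring

/-- the generator is bounded below by `-Λ f` on the cone. -/
lemma Lexc_lower {d k : ℕ} (f : Conf d k → ℝ) (hf : ∀ x ∈ SSet d k, 0 ≤ f x) (x : Conf d k)
    (hx : x ∈ SSet d k) : 0 ≤ Lexc f x + Lam d k * f x := by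
  have h0 := hf x hx
  have h1 : (k : ℝ) * (d * 2) * (-f x) ≤ ∑ m : Fin k, ∑ a : Fin d × Bool,
        if mv x m a ∈ SSet d k then f (mv x m a) - f x else 0 := by
    have : (k : ℝ) * (d * 2) * (-f x) = ∑ m : Fin k, ∑ a : Fin d × Bool, (-f x) := by
      simp; ring
    rw [this]
    refine Finset.sum_le_sum fun m _ => Finset.sum_le_sum fun a _ => ?_
    split_ifs with h
    · linarith [hf _ h]
    · linarith
  have h2 : (k : ℝ) * k * (-f x) ≤ ∑ i : Fin k, ∑ j : Fin k,
        if i < j ∧ vnorm (x i - x j) = 1 ∧ x ∈ SSet d k then f (cswap i j x) - f x else 0 := by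
    have : (k : ℝ) * k * (-f x) = ∑ m : Fin k, ∑ a : Fin k, (-f x) := by
      simp; ring
    rw [this]
    refine Finset.sum_le_sum fun m _ => Finset.sum_le_sum fun a _ => ?_
    split_ifs with h
    · linarith [hf _ (cswap_mem hx m a)]
    · linarith
  rw [Lexc_eq, Lam]
  linarith

lemma half_sum {d k : ℕ} {x : Conf d k} (hx : x ∈ SSet d k) (i : Fin k)
    (D : (Fin d → ℤ) → ℝ) :
    (∑ a, if mv x i a ∈ SSet d k then D (x i + uv a) else 0) +
      ∑ n, (if n ≠ i ∧ vnorm (x i - x n) = 1 then D (x n) else 0) = ∑ a, D (x i + uv a) := by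
  have hfree : ∀ a, mv x i a ∈ SSet d k ↔ ∀ n, n ≠ i → x n ≠ x i + uv a := by
    intro a
    constructor
    · intro h n hn
      have := h n i hn
      simpa [mv, hn] using this
    · intro h p q hpq
      by_cases hp : p = i
      · subst hp
        have := h q (Ne.symm hpq)
        simpa [mv, Ne.symm hpq] using this.symm
      · by_cases hq : q = i
        · subst hq
          simpa [mv, hp] using h p hp
        · simpa [mv, hp, hq] using hx p q hpq
  have h1 : ∀ n, (if n ≠ i ∧ vnorm (x i - x n) = 1 then D (x n) else 0) =
      ∑ a, if n ≠ i ∧ x n = x i + uv a then D (x n) else 0 := by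
    intro n
    by_cases hn : n = i
    · simp [hn]
    · by_cases hv : vnorm (x i - x n) = 1
      · rw [vnorm_sub_comm] at hv
        obtain ⟨a, ha⟩ := (vnorm_eq_one _).1 hv
        have ha' : x n = x i + uv a := by rw [← ha]; abel
        rw [Finset.sum_eq_single a]
        · rw [vnorm_sub_comm, if_pos ⟨hn, hv⟩, if_pos ⟨hn, ha'⟩]
        · intro c _ hc
          rw [if_neg]
          rintro ⟨_, h⟩
          rw [ha'] at h
          exact hc (uv_inj (add_left_cancel h)).symm
        · simp
      · rw [if_neg (fun h => hv h.2)]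
        symm
        refine Finset.sum_eq_zero fun a _ => ?_
        rw [if_neg]
        rintro ⟨_, h⟩
        apply hv
        rw [vnorm_sub_comm, vnorm_eq_one]
        exact ⟨a, by rw [h]; abel⟩
  simp_rw [h1]
  rw [Finset.sum_comm, ← Finset.sum_add_distrib]
  refine Finset.sum_congr rfl fun a _ => ?_
  by_cases hf : mv x i a ∈ SSet d k
  · rw [if_pos hf]
    rw [Finset.sum_eq_zero, add_zero]
    intro n _
    rw [if_neg]
    rintro ⟨hn, h⟩
    exact (hfree a).1 hf n hn h
  · rw [if_neg hf, zero_add]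
    have : ∃ n, n ≠ i ∧ x n = x i + uv a := by
      by_contra hcon
      push Not at hcon
      exact hf ((hfree a).2 hcon)
    obtain ⟨n, hn, hxn⟩ := this
    rw [Finset.sum_eq_single n]
    · rw [if_pos ⟨hn, hxn⟩, hxn]
    · intro q _ hq
      rw [if_neg]
      rintro ⟨_, h⟩
      exact hx q n hq (h.trans hxn.symm)
    · simp

lemma swap_sum {k : ℕ} (i j : Fin k) (hij : i ≠ j) (G : Fin k → Fin k → ℝ)
    (hsymm : ∀ a b, G a b = G b a) (hGij : G i j = 0)
    (h0 : ∀ a b, a ≠ i → a ≠ j → b ≠ i → b ≠ j → G a b = 0) :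
    ∑ a, ∑ b, (if a < b then G a b else 0) =
      ∑ n, (if n ≠ i then G i n else 0) + ∑ n, (if n ≠ j then G j n else 0) := by
  have key : ∀ a b, (if a < b then G a b else 0) =
      (if a = i then (if i < b then G i b else 0) else 0) +
      (if b = i then (if a < i then G i a else 0) else 0) +
      (if a = j then (if j < b then G j b else 0) else 0) +
      (if b = j then (if a < j then G j a else 0) else 0) := by
    intro a b
    have hGji : G j i = 0 := by rw [hsymm]; exact hGij
    by_cases hai : a = i
    · subst hai
      by_cases hbj : b = j
      · subst hbj; simp [hGij, hGji]
      · by_cases hba : b = a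
        · subst hba; simp [hij]
        · simp [hij, hbj, hba]
    · by_cases haj : a = j
      · subst haj
        by_cases hbi : b = i
        · subst hbi; simp [hGij, hGji]
        · by_cases hba : b = a
          · subst hba; simp [hbi]
          · simp [hai, hbi, hba]
      · by_cases hbi : b = i
        · subst hbi; rw [hsymm a b]; simp [hai, haj, hij]
        · by_cases hbj : b = j
          · subst hbj; rw [hsymm a b]; simp [hai, haj, Ne.symm hij]
          · simp [hai, haj, hbi, hbj, h0 a b hai haj hbi hbj]
  have one : ∀ p : Fin k, ∑ n, (if n ≠ p then G p n else 0) =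
      (∑ n, if p < n then G p n else 0) + ∑ n, if n < p then G p n else 0 := by
    intro p
    rw [← Finset.sum_add_distrib]
    refine Finset.sum_congr rfl fun n _ => ?_
    rcases lt_trichotomy n p with h | h | h
    · simp [h, h.ne, not_lt.2 h.le]
    · simp [h]
    · simp [h, h.ne', not_lt.2 h.le]
  rw [Finset.sum_congr rfl fun a _ => Finset.sum_congr rfl fun b _ => key a b]
  simp only [Finset.sum_add_distrib]
  rw [one i, one j]
  have c1 : ∀ (p : Fin k) (F : Fin k → ℝ), ∑ a, ∑ b, (if a = p then F b else 0) = ∑ b, F b := by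
    intro p F
    rw [Finset.sum_comm]
    simp
  have c2 : ∀ (p : Fin k) (F : Fin k → ℝ), ∑ a, ∑ b, (if b = p then F a else 0) = ∑ a, F a := by
    intro p F
    simp
  rw [c1 i (fun b => if i < b then G i b else 0), c2 i (fun a => if a < i then G i a else 0),
    c1 j (fun b => if j < b then G j b else 0), c2 j (fun a => if a < j then G j a else 0)]
  ring

lemma pair_generator {d k : ℕ} {x : Conf d k} (hx : x ∈ SSet d k) (i j : Fin k) (hij : i ≠ j)
    (h : (Fin d → ℤ) → ℝ) (heven : ∀ z, h (-z) = h z) (hmax : ∀ z, h z ≤ h 0) :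
    Lexc (fun x : Conf d k => h (x i - x j)) x ≤
      2 * ∑ a, (h (x i - x j + uv a) - h (x i - x j)) := by
  set z := x i - x j with hz
  rw [Lexc_eq]
  have hJ : (∑ m : Fin k, ∑ a : Fin d × Bool,
        if mv x m a ∈ SSet d k then h (mv x m a i - mv x m a j) - h (x i - x j) else 0) =
      (∑ a : Fin d × Bool, if mv x i a ∈ SSet d k then (h ((x i + uv a) - x j) - h z) else 0) +
      ∑ a : Fin d × Bool, if mv x j a ∈ SSet d k then (h (x i - (x j + uv a)) - h z) else 0 := by
    rw [Fintype.sum_eq_add i j hij]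
    · congr 1
      · refine Finset.sum_congr rfl fun a _ => ?_
        simp [mv, hij.symm, hz]
      · refine Finset.sum_congr rfl fun a _ => ?_
        simp [mv, hij, hz]
    · rintro m ⟨hmi, hmj⟩
      refine Finset.sum_eq_zero fun a _ => ?_
      simp [mv, Ne.symm hmi, Ne.symm hmj]
  rw [hJ]
  set G : Fin k → Fin k → ℝ := fun a b => if vnorm (x a - x b) = 1 then
    h (cswap a b x i - cswap a b x j) - h z else 0 with hG
  have hS : (∑ a : Fin k, ∑ b : Fin k,
        if a < b ∧ vnorm (x a - x b) = 1 ∧ x ∈ SSet d k then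
          h (cswap a b x i - cswap a b x j) - h (x i - x j) else 0) =
      ∑ a, ∑ b, (if a < b then G a b else 0) := by
    refine Finset.sum_congr rfl fun a _ => Finset.sum_congr rfl fun b _ => ?_
    by_cases h1 : a < b <;> by_cases h2 : vnorm (x a - x b) = 1 <;> simp [hG, h1, h2, hx, hz]
  have hGij : G i j = 0 := by
    simp only [hG, cswap, Function.comp, Equiv.swap_apply_left, Equiv.swap_apply_right]
    rw [← neg_sub (x i) (x j), heven]
    simp [hz]
  have hsymm : ∀ a b, G a b = G b a := by
    intro a b
    simp only [hG, cswap]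
    rw [vnorm_sub_comm, Equiv.swap_comm]
  have h0 : ∀ a b, a ≠ i → a ≠ j → b ≠ i → b ≠ j → G a b = 0 := by
    intro a b hai haj hbi hbj
    simp only [hG, cswap, Function.comp]
    rw [Equiv.swap_apply_of_ne_of_ne (Ne.symm hai) (Ne.symm hbi),
      Equiv.swap_apply_of_ne_of_ne (Ne.symm haj) (Ne.symm hbj)]
    simp [hz]
  rw [hS, swap_sum i j hij G hsymm hGij h0]
  have e1 := half_sum hx i (fun u => h (u - x j) - h z)
  have e2 := half_sum hx j (fun u => h (x i - u) - h z)
  have l1 : ∑ n, (if n ≠ i then G i n else 0) ≤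
      ∑ n, (if n ≠ i ∧ vnorm (x i - x n) = 1 then h (x n - x j) - h z else 0) := by
    refine Finset.sum_le_sum fun n _ => ?_
    by_cases hn : n = i
    · simp [hn]
    · by_cases hnj : n = j
      · subst hnj
        rw [if_pos hn, hGij]
        split_ifs
        · rw [sub_self]; linarith [hmax z]
        · exact le_rfl
      · simp only [hG, cswap, Function.comp, Equiv.swap_apply_left]
        rw [Equiv.swap_apply_of_ne_of_ne hij.symm (Ne.symm hnj)]
        by_cases h2 : vnorm (x i - x n) = 1 <;> simp [hn, h2]
  have l2 : ∑ n, (if n ≠ j then G j n else 0) ≤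
      ∑ n, (if n ≠ j ∧ vnorm (x j - x n) = 1 then h (x i - x n) - h z else 0) := by
    refine Finset.sum_le_sum fun n _ => ?_
    by_cases hn : n = j
    · simp [hn]
    · by_cases hni : n = i
      · subst hni
        rw [if_pos hn, hsymm, hGij]
        split_ifs
        · rw [sub_self]; linarith [hmax z]
        · exact le_rfl
      · simp only [hG, cswap, Function.comp, Equiv.swap_apply_left]
        rw [Equiv.swap_apply_of_ne_of_ne hij (Ne.symm hni)]
        by_cases h2 : vnorm (x j - x n) = 1 <;> simp [hn, h2]
  have r1 : ∑ a, (h (x i + uv a - x j) - h z) = ∑ a, (h (z + uv a) - h z) := by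
    refine Finset.sum_congr rfl fun a _ => ?_
    rw [hz]; congr 2; abel
  have r2 : ∑ a, (h (x i - (x j + uv a)) - h z) = ∑ a, (h (z + uv a) - h z) := by
    have hneg : ∀ a : Fin d × Bool, uv (a.1, !a.2) = - uv a := by
      rintro ⟨l, b⟩
      funext q
      by_cases hq : q = l
      · subst hq; cases b <;> simp [uv, sg]
      · simp [uv, hq]
    refine Fintype.sum_equiv ((Equiv.refl _).prodCongr Equiv.boolNot) _ _ ?_
    rintro ⟨l, b⟩
    have := hneg (l, b)
    simp only [Equiv.prodCongr_apply, Prod.map, Equiv.refl_apply, Equiv.boolNot_apply] at this ⊢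
    rw [this, hz]; congr 2; abel
  linarith

/-! ### The semigroup of the exclusion process -/

lemma Lexc_add {d k : ℕ} (f g : Conf d k → ℝ) :
    Lexc (fun x => f x + g x) = fun x => Lexc f x + Lexc g x := by
  funext x
  simp only [Lexc_eq]
  rw [add_add_add_comm]
  congr 1
  · rw [← Finset.sum_add_distrib]
    refine Finset.sum_congr rfl fun m _ => ?_
    rw [← Finset.sum_add_distrib]
    refine Finset.sum_congr rfl fun a _ => ?_
    split_ifs <;> ring
  · rw [← Finset.sum_add_distrib]
    refine Finset.sum_congr rfl fun m _ => ?_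
    rw [← Finset.sum_add_distrib]
    refine Finset.sum_congr rfl fun a _ => ?_
    split_ifs <;> ring

lemma Lexc_smul {d k : ℕ} (c : ℝ) (f : Conf d k → ℝ) :
    Lexc (fun x => c * f x) = fun x => c * Lexc f x := by
  funext x
  simp only [Lexc_eq]
  rw [mul_add, Finset.mul_sum, Finset.mul_sum]
  congr 1
  · refine Finset.sum_congr rfl fun m _ => ?_
    rw [Finset.mul_sum]
    refine Finset.sum_congr rfl fun a _ => ?_
    split_ifs <;> ring
  · refine Finset.sum_congr rfl fun m _ => ?_
    rw [Finset.mul_sum]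
    refine Finset.sum_congr rfl fun a _ => ?_
    split_ifs <;> ring

/-- The generator as a bounded operator. -/
def Lop (d k : ℕ) : BF (Conf d k) →L[ℝ] BF (Conf d k) :=
  BF.mkOp Lexc (Lam d k * 2) (by have := Lam_nonneg d k; positivity)
    (fun f g => Lexc_add f g) (fun c f => Lexc_smul c f)
    (fun f x => by
      have := Lexc_abs_le f ‖f‖ f.abs_apply_le x
      linarith)

lemma Lop_apply {d k : ℕ} (f : BF (Conf d k)) (x : Conf d k) : Lop d k f x = Lexc f x := rfl

lemma Lop_pow {d k : ℕ} (n : ℕ) (f : BF (Conf d k)) :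
    (((Lop d k) ^ n) f : Conf d k → ℝ) = Lexc^[n] f := by
  induction n with
  | zero => rfl
  | succ n ih =>
    rw [pow_succ', mul_apply_eq_comp, Function.iterate_succ_apply', ← ih]
    rfl

/-- Delta function as a bounded function. -/
def deltaB {d k : ℕ} (y : Conf d k) : BF (Conf d k) :=
  BF.mk (deltaFn y) 1 (fun x => by unfold deltaFn; split_ifs <;> simp)

lemma deltaB_apply {d k : ℕ} (y x : Conf d k) : deltaB y x = if x = y then 1 else 0 := by
  change deltaFn y x = _
  unfold deltaFn
  congr

lemma ptl_eq {d k : ℕ} (t : ℝ) (x y : Conf d k) : ptl t x y = semi (Lop d k) t (deltaB y) x := by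
  have h := (semi_hasSum (Lop d k) t (BF.ev x) (deltaB y)).tsum_eq
  rw [BF.ev_apply] at h
  rw [← h, ptl]
  refine tsum_congr fun n => ?_
  rw [BF.ev_apply, Lop_pow]
  rfl

lemma semi_pos {d k : ℕ} {t : ℝ} (ht : 0 ≤ t) (f : BF (Conf d k))
    (hf : ∀ x ∈ SSet d k, 0 ≤ f x) (x : Conf d k) (hx : x ∈ SSet d k) :
    0 ≤ semi (Lop d k) t f x := by
  rw [semi_shift (Lop d k) (Lam d k) t]
  have hpow : ∀ n : ℕ, ∀ y ∈ SSet d k, 0 ≤ ((Lop d k + Lam d k • 1) ^ n) f y := by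
    intro n
    induction n with
    | zero => exact hf
    | succ n ih =>
      intro y hy
      rw [pow_succ', mul_apply_eq_comp]
      exact Lexc_lower _ ih y hy
  have h := (semi_hasSum (Lop d k + Lam d k • 1) t (BF.ev x) f).nonneg (fun n => by
    have := hpow n x hx
    rw [BF.ev_apply]
    positivity)
  rw [BF.ev_apply] at h
  exact mul_nonneg (Real.exp_pos _).le h

lemma semi_mono {d k : ℕ} {t : ℝ} (ht : 0 ≤ t) (f g : BF (Conf d k))
    (hf : ∀ x ∈ SSet d k, f x ≤ g x) (x : Conf d k) (hx : x ∈ SSet d k) :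
    semi (Lop d k) t f x ≤ semi (Lop d k) t g x := by
  have h := semi_pos ht (g - f) (fun y hy => by
    rw [BF.sub_apply]; linarith [hf y hy]) x hx
  rw [map_sub, BF.sub_apply] at h
  linarith

lemma comparison {d k : ℕ} {t : ℝ} (ht : 0 ≤ t) (F F' : ℝ → BF (Conf d k))
    (hF : ∀ s, HasDerivAt F (F' s) s)
    (hsup : ∀ s, ∀ x ∈ SSet d k, Lop d k (F s) x ≤ F' s x)
    (x : Conf d k) (hx : x ∈ SSet d k) :
    semi (Lop d k) t (F 0) x ≤ F t x := by
  have hder : ∀ s, HasDerivAt (fun s => BF.ev x (semi (Lop d k) (t - s) (F s)))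
      (BF.ev x (semi (Lop d k) (t - s) (F' s - Lop d k (F s)))) s := by
    intro s
    have h1 : HasDerivAt (fun s : ℝ => t - s) (-1) s := by
      simpa using (hasDerivAt_id s).const_sub t
    have h2 := (semi_hasDerivAt' (Lop d k) (t - s)).scomp s h1
    have h3 := h2.clm_apply (hF s)
    have h4 := (BF.ev x).hasFDerivAt.comp_hasDerivAt s h3
    have e : ((-1 : ℝ) • (semi (Lop d k) (t - s) * Lop d k)) (F s) +
        (semi (Lop d k) (t - s)) (F' s) =
        semi (Lop d k) (t - s) (F' s - Lop d k (F s)) := by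
      rw [map_sub]
      simp
      abel
    rw [← e]
    exact h4
  have hmono : MonotoneOn (fun s => BF.ev x (semi (Lop d k) (t - s) (F s))) (Set.Icc 0 t) := by
    refine monotoneOn_of_deriv_nonneg (convex_Icc 0 t) ?_ ?_ ?_
    · exact fun s _ => (hder s).continuousAt.continuousWithinAt
    · exact fun s _ => (hder s).differentiableAt.differentiableWithinAt
    · intro s hs
      rw [interior_Icc] at hs
      rw [(hder s).deriv]
      refine semi_pos (by linarith [hs.2]) _ ?_ x hx
      intro y hy
      rw [BF.sub_apply]
      linarith [hsup s y hy]
  have h := hmono (Set.left_mem_Icc.2 ht) (Set.right_mem_Icc.2 ht) ht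
  simp only [sub_zero, sub_self, semi_zero] at h
  exact h

/-- Pull-back along a coordinate difference. -/
def pull {d k : ℕ} (i j : Fin k) (l : Fin d) : BF ℤ →L[ℝ] BF (Conf d k) :=
  BF.mkOp (fun f x => f (x i l - x j l)) 1 (by norm_num) (fun f g => rfl) (fun c f => rfl)
    (fun f x => by simpa using f.abs_apply_le _)

lemma pull_apply {d k : ℕ} (i j : Fin k) (l : Fin d) (f : BF ℤ) (x : Conf d k) :
    pull i j l f x = f (x i l - x j l) := rfl

/-- Product heat kernel on `ℤ^d`. -/
def hprod (d : ℕ) (s : ℝ) (z : Fin d → ℤ) : ℝ := ∏ l, phi s (z l)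

/-- Pair function. -/
def pairF {d k : ℕ} (i j : Fin k) (s : ℝ) : BF (Conf d k) :=
  ∏ l : Fin d, pull i j l (phi s)

lemma pairF_apply {d k : ℕ} (i j : Fin k) (s : ℝ) (x : Conf d k) :
    pairF i j s x = hprod d s (x i - x j) := by
  rw [pairF, BF.prod_apply]
  rfl

/-- Its derivative. -/
def pairF' {d k : ℕ} (i j : Fin k) (s : ℝ) : BF (Conf d k) :=
  ∑ l : Fin d, (∏ m ∈ Finset.univ.erase l, pull i j m (phi s)) • pull i j l (M1 (phi s))

lemma pairF_hasDerivAt {d k : ℕ} (i j : Fin k) (s : ℝ) :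
    HasDerivAt (pairF (d := d) i j) (pairF' i j s) s := by
  refine HasDerivAt.fun_finsetProd (f := fun l s => pull i j l (phi s)) ?_
  intro l _
  exact (pull i j l).hasFDerivAt.comp_hasDerivAt s (phi_hasDerivAt s)

lemma pairF'_apply {d k : ℕ} (i j : Fin k) (s : ℝ) (x : Conf d k) :
    pairF' i j s x = 2 * ∑ a, (hprod d s (x i - x j + uv a) - hprod d s (x i - x j)) := by
  set z := x i - x j with hz
  have hu : ∀ l b, hprod d s (z + uv (l, b)) =
      (∏ m ∈ Finset.univ.erase l, phi s (z m)) * phi s (z l + sg b) := by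
    intro l b
    rw [hprod, ← Finset.prod_erase_mul _ _ (Finset.mem_univ l)]
    congr 1
    · refine Finset.prod_congr rfl fun m hm => ?_
      simp [uv, Finset.ne_of_mem_erase hm]
    · simp [uv]
  have h0 : ∀ l, hprod d s z = (∏ m ∈ Finset.univ.erase l, phi s (z m)) * phi s (z l) := by
    intro l
    rw [hprod, ← Finset.prod_erase_mul _ _ (Finset.mem_univ l)]
  rw [pairF', BF.sum_apply, Fintype.sum_prod_type, Finset.mul_sum]
  refine Finset.sum_congr rfl fun l _ => ?_
  rw [smul_eq_mul, BF.mul_apply, BF.prod_apply, pull_apply, M1_apply, Fintype.sum_bool,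
    hu, hu, h0 l]
  simp only [pull_apply, sg, hz, Pi.sub_apply]
  simp only [if_true, Bool.false_eq_true, if_false, ← sub_eq_add_neg]
  ring

lemma hprod_even (d : ℕ) (s : ℝ) (z : Fin d → ℤ) : hprod d s (-z) = hprod d s z := by
  unfold hprod
  refine Finset.prod_congr rfl fun l _ => ?_
  rw [Pi.neg_apply, phi_even]

lemma hprod_le (d : ℕ) (s : ℝ) (z : Fin d → ℤ) : hprod d s z ≤ hprod d s 0 := by
  unfold hprod
  refine (le_abs_self _).trans ?_
  rw [Finset.abs_prod]
  exact Finset.prod_le_prod (fun _ _ => abs_nonneg _) (fun l _ => phi_abs_le s (z l))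

lemma hprod_bound (d : ℕ) {s : ℝ} (hs : 0 ≤ s) (z : Fin d → ℤ) :
    hprod d s z ≤ 4 ^ d / (Real.sqrt s + 1) ^ d := by
  refine (hprod_le d s z).trans ?_
  have h0 : 0 ≤ phi s 0 := (abs_nonneg _).trans (phi_abs_le s 0)
  simp only [hprod, Pi.zero_apply, Finset.prod_const, Finset.card_univ, Fintype.card_fin]
  rw [← div_pow]
  exact pow_le_pow_left₀ h0 (phi_bound hs) d

lemma pairF_comparison {d k : ℕ} {t : ℝ} (ht : 0 ≤ t) (i j : Fin k) (hij : i ≠ j)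
    (x : Conf d k) (hx : x ∈ SSet d k) :
    semi (Lop d k) t (pairF i j 0) x ≤ 4 ^ d / (Real.sqrt t + 1) ^ d := by
  refine (comparison ht (pairF i j) (pairF' i j) (pairF_hasDerivAt i j) ?_ x hx).trans ?_
  · intro s y hy
    rw [pairF'_apply, Lop_apply]
    have e : (pairF i j s : Conf d k → ℝ) = fun x => hprod d s (x i - x j) :=
      funext fun x => pairF_apply i j s x
    rw [e]
    exact pair_generator hy i j hij (hprod d s) (hprod_even d s) (hprod_le d s)
  · rw [pairF_apply]
    exact hprod_bound d ht _

lemma g1_nonneg (z : ℤ) : 0 ≤ g1 z := by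
  rw [g1_apply]; split_ifs <;> norm_num

lemma hprod_zero_nonneg (d : ℕ) (z : Fin d → ℤ) : 0 ≤ hprod d 0 z := by
  unfold hprod
  rw [phi_zero]
  exact Finset.prod_nonneg fun l _ => g1_nonneg _

lemma hprod_zero_uv {d : ℕ} (a : Fin d × Bool) : hprod d 0 (uv a) = 1 / 2 := by
  obtain ⟨l, b⟩ := a
  unfold hprod
  rw [phi_zero, Finset.prod_eq_single l]
  · cases b <;> simp [uv, sg, g1_apply]
  · intro m _ hm
    simp [uv, hm, g1_apply]
  · simp

/-- number of adjacent pairs -/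
def adjW {d k : ℕ} (w : Conf d k) : ℝ := ∑ i : Fin k, ∑ j : Fin k,
  if i < j ∧ vnorm (w i - w j) = 1 then (1 : ℝ) else 0

lemma adjW_nonneg {d k : ℕ} (w : Conf d k) : 0 ≤ adjW w := by
  unfold adjW
  refine Finset.sum_nonneg fun i _ => Finset.sum_nonneg fun j _ => ?_
  split_ifs <;> norm_num

/-- dominating function -/
def domF (d k : ℕ) : BF (Conf d k) := ∑ i : Fin k, ∑ j : Fin k,
  if i < j then (2 : ℝ) • pairF i j 0 else 0

lemma adjW_le {d k : ℕ} (w : Conf d k) : adjW w ≤ domF d k w := by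
  unfold adjW domF
  rw [BF.sum_apply]
  refine Finset.sum_le_sum fun i _ => ?_
  rw [BF.sum_apply]
  refine Finset.sum_le_sum fun j _ => ?_
  by_cases h : i < j
  · rw [if_pos h, BF.smul_apply, pairF_apply]
    split_ifs with h2
    · obtain ⟨a, ha⟩ := (vnorm_eq_one _).1 h2.2
      rw [ha, hprod_zero_uv]; norm_num
    · have := hprod_zero_nonneg d (w i - w j)
      positivity
  · rw [if_neg h, if_neg (fun h' => h h'.1), BF.zero_apply]

lemma semi_domF {d k : ℕ} {t : ℝ} (ht : 0 ≤ t) (x : Conf d k) (hx : x ∈ SSet d k) :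
    semi (Lop d k) t (domF d k) x ≤ (k * (k * (2 * (4 ^ d / (Real.sqrt t + 1) ^ d)))) := by
  unfold domF
  have hK : 0 ≤ (4 : ℝ) ^ d / (Real.sqrt t + 1) ^ d := by positivity
  rw [map_sum, BF.sum_apply]
  refine (Finset.sum_le_card_nsmul _ _ (k * (2 * (4 ^ d / (Real.sqrt t + 1) ^ d))) ?_).trans
    (le_of_eq (by simp))
  intro i _
  rw [map_sum, BF.sum_apply]
  refine (Finset.sum_le_card_nsmul _ _ (2 * (4 ^ d / (Real.sqrt t + 1) ^ d)) ?_).trans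
    (le_of_eq (by simp))
  intro j _
  split_ifs with h
  · rw [map_smul, BF.smul_apply]
    have := pairF_comparison ht i j h.ne x hx
    linarith
  · rw [map_zero, BF.zero_apply]
    positivity

/-- Lemma (collision estimate): for integers `d ≥ 1`, `k ≥ 2` there is a constant `C = C(k,d)`
such that for every `x ∈ 𝕊^k` and `t ≥ 0`,
`Σ_{w ∈ 𝕊^k} p_t^ℓ(x,w) Σ_{1 ≤ i < j ≤ k} 1{‖w_i − w_j‖ = 1} ≤ C / (√t + 1)^d`. -/
theorem collision_bound (d k : ℕ) (hd : 1 ≤ d) (hk : 2 ≤ k) :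
    ∃ C : ℝ, 0 < C ∧ ∀ x : Conf d k, x ∈ SSet d k → ∀ t : ℝ, 0 ≤ t →
      Summable (fun w : SSet d k => ptl t x w.val *
        ∑ i : Fin k, ∑ j : Fin k,
          if i < j ∧ vnorm (w.val i - w.val j) = 1 then (1 : ℝ) else 0) ∧
      (∑' w : SSet d k, ptl t x w.val *
        ∑ i : Fin k, ∑ j : Fin k,
          if i < j ∧ vnorm (w.val i - w.val j) = 1 then (1 : ℝ) else 0) ≤
        C / (Real.sqrt t + 1) ^ d := by
  refine ⟨k * (k * (2 * 4 ^ d)), ?_, ?_⟩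
  · have : (0 : ℝ) < k := by exact_mod_cast (by omega : 0 < k)
    positivity
  intro x hx t ht
  have hnn : (0 : SSet d k → ℝ) ≤ fun w : SSet d k => ptl t x w.val * adjW w.val := by
    intro w
    refine mul_nonneg ?_ (adjW_nonneg _)
    rw [ptl_eq]
    refine semi_pos ht _ ?_ x hx
    intro y _
    rw [deltaB_apply]
    split_ifs <;> norm_num
  have hb : ∀ u : Finset (SSet d k), ∑ w ∈ u, ptl t x w.val * adjW w.val ≤
      k * (k * (2 * 4 ^ d)) / (Real.sqrt t + 1) ^ d := by
    intro u
    have e : ∑ w ∈ u, ptl t x w.val * adjW w.val =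
        semi (Lop d k) t (∑ w ∈ u, adjW w.val • deltaB w.val) x := by
      rw [map_sum, BF.sum_apply]
      refine Finset.sum_congr rfl fun w _ => ?_
      rw [map_smul, BF.smul_apply, ptl_eq, mul_comm]
    rw [e]
    refine (semi_mono ht _ (domF d k) ?_ x hx).trans ((semi_domF ht x hx).trans (le_of_eq ?_))
    · intro y hy
      refine le_trans ?_ (adjW_le y)
      rw [BF.sum_apply]
      simp only [BF.smul_apply, deltaB_apply]
      have e2 : ∀ w : SSet d k, (adjW w.val * if y = w.val then (1 : ℝ) else 0) =
          if (⟨y, hy⟩ : SSet d k) = w then adjW y else 0 := by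
        intro w
        by_cases h : y = w.val
        · have h' : (⟨y, hy⟩ : SSet d k) = w := Subtype.ext h
          rw [if_pos h, if_pos h', h, mul_one]
        · have h' : ¬ (⟨y, hy⟩ : SSet d k) = w := fun h' => h (congrArg Subtype.val h')
          rw [if_neg h, if_neg h', mul_zero]
      rw [Finset.sum_congr rfl fun w _ => e2 w, Finset.sum_ite_eq]
      split_ifs
      · exact le_rfl
      · exact adjW_nonneg y
    · ring
  exact ⟨summable_of_sum_le hnn hb, Real.tsum_le_of_sum_le hnn hb⟩

end SSEPPaper
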